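/- (Exact long-distance asymptotics.) For every integer N ≥ 3 and every s with 0 < s < 1, there exists a real number L > 0 such that e^{(N-1)r} · r^{1-s} · F_{N,s}(r) converges to L as r → ∞. -/

import Mathlib

open Real MeasureTheory Set Filter

/-- The explicit function comparable to the heat kernel of hyperbolic space `ℍ^N`
at geodesic distance `r`. -/
noncomputable def hN (N : ℕ) (t r : ℝ) : ℝ :=
  (4 * π * t) ^ (-(N : ℝ) / 2) *
    Real.exp (-(((N : ℝ) - 1) ^ 2 * t) / 4 - ((N : ℝ) - 1) * r / 2 - r ^ 2 / (4 * t)) *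
    (1 + r + t) ^ (((N : ℝ) - 3) / 2) * (1 + r)

/-- `F N s r = ∫₀^∞ h_N(t,r) t^{s-1} dt`, comparable to the Green function of
`(-Δ_{ℍ^N})^s` at geodesic distance `r`. -/
noncomputable def F (N : ℕ) (s r : ℝ) : ℝ :=
  ∫ t in Ioi (0 : ℝ), hN N t r * t ^ (s - 1)

noncomputable def KK (p a b c ε z : ℝ) : ℝ :=
  Real.exp (p * (z * ε)) * (1 + ε ^ 2 + c * Real.exp (z * ε)) ^ b *
    Real.exp (-(2 * a) * (Real.sinh (z * ε / 2) / ε) ^ 2)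

lemma sinh_sq_ge (x : ℝ) : x ^ 2 ≤ Real.sinh x ^ 2 := by
  rw [sq_le_sq, Real.abs_sinh]
  exact Real.self_le_sinh_iff.2 (abs_nonneg x)

lemma KK_bound (p a b c ε z : ℝ) (ha : 0 < a) (hb : 0 ≤ b) (hc : 0 < c) (h0 : 0 < ε) (h1 : ε ≤ 1) :
    ‖KK p a b c ε z‖ ≤ ((2 + c) ^ b * Real.exp ((|p| + b) ^ 2 / a)) *
      Real.exp (-(a / 4) * z ^ 2) := by
  have hzε : |z * ε| ≤ |z| := by
    rw [abs_mul, abs_of_pos h0]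
    exact mul_le_of_le_one_right (abs_nonneg z) h1
  have e1 : Real.exp (p * (z * ε)) ≤ Real.exp (|p| * |z|) := by
    apply Real.exp_le_exp.2
    calc p * (z * ε) ≤ |p * (z * ε)| := le_abs_self _
      _ = |p| * |z * ε| := abs_mul _ _
      _ ≤ |p| * |z| := by gcongr
  have e2 : (1 + ε ^ 2 + c * Real.exp (z * ε)) ^ b ≤ (2 + c) ^ b * Real.exp (b * |z|) := by
    have h : 1 + ε ^ 2 + c * Real.exp (z * ε) ≤ (2 + c) * Real.exp |z| := by
      have h3 : Real.exp (z * ε) ≤ Real.exp |z| := Real.exp_le_exp.2 ((le_abs_self _).trans hzε)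
      have h4 : 1 ≤ Real.exp |z| := Real.one_le_exp (abs_nonneg z)
      have h5 : ε ^ 2 ≤ 1 := by nlinarith
      nlinarith
    calc (1 + ε ^ 2 + c * Real.exp (z * ε)) ^ b ≤ ((2 + c) * Real.exp |z|) ^ b :=
          Real.rpow_le_rpow (by positivity) h hb
      _ = _ := by
          rw [Real.mul_rpow (by positivity) (by positivity), ← Real.exp_mul, mul_comm b]
  have e3 : Real.exp (-(2 * a) * (Real.sinh (z * ε / 2) / ε) ^ 2) ≤ Real.exp (-(a / 2) * z ^ 2) := by
    apply Real.exp_le_exp.2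
    have : z ^ 2 / 4 ≤ (Real.sinh (z * ε / 2) / ε) ^ 2 := by
      rw [div_pow, le_div_iff₀ (by positivity)]
      have := sinh_sq_ge (z * ε / 2)
      nlinarith
    nlinarith
  have hn : 0 ≤ KK p a b c ε z := by unfold KK; positivity
  rw [Real.norm_of_nonneg hn]
  unfold KK
  calc _ ≤ Real.exp (|p| * |z|) * ((2 + c) ^ b * Real.exp (b * |z|)) * Real.exp (-(a / 2) * z ^ 2) := by
        gcongr
    _ = (2 + c) ^ b * Real.exp (|p| * |z| + b * |z| + -(a / 2) * z ^ 2) := by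
        rw [Real.exp_add, Real.exp_add]; ring
    _ ≤ (2 + c) ^ b * Real.exp ((|p| + b) ^ 2 / a + -(a / 4) * z ^ 2) := by
        refine mul_le_mul_of_nonneg_left (Real.exp_le_exp.2 ?_) (by positivity)
        have hq : (|p| + b) * |z| ≤ (|p| + b) ^ 2 / a + a / 4 * |z| ^ 2 := by
          have : 0 ≤ ((|p| + b) - a / 2 * |z|) ^ 2 / a := by positivity
          have h2 : ((|p| + b) - a / 2 * |z|) ^ 2 / a =
            (|p| + b) ^ 2 / a - (|p| + b) * |z| + a / 4 * |z| ^ 2 := by field_simp; ring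
          linarith
        rw [sq_abs] at hq
        linarith
    _ = _ := by rw [Real.exp_add]; ring

lemma KK_tendsto (p a b c : ℝ) (ha : 0 < a) (hb : 0 ≤ b) (hc : 0 < c) :
    Tendsto (fun ε => ∫ z, KK p a b c ε z) (nhdsWithin 0 (Ioi 0))
      (nhds (∫ z, (1 + c) ^ b * Real.exp (-(a / 2) * z ^ 2))) := by
  apply tendsto_integral_filter_of_dominated_convergence
    (fun z => ((2 + c) ^ b * Real.exp ((|p| + b) ^ 2 / a)) * Real.exp (-(a / 4) * z ^ 2))
  · filter_upwards with ε
    apply Measurable.aestronglyMeasurable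
    unfold KK
    fun_prop
  · filter_upwards [Ioc_mem_nhdsGT (zero_lt_one (α := ℝ))] with ε hε
    filter_upwards with z
    exact KK_bound p a b c ε z ha hb hc hε.1 hε.2
  · exact (integrable_exp_neg_mul_sq (by positivity)).const_mul _
  · filter_upwards with z
    have hid : Tendsto (fun ε : ℝ => ε) (nhdsWithin 0 (Ioi 0)) (nhds 0) := nhdsWithin_le_nhds
    have h1 : Tendsto (fun ε : ℝ => Real.exp (p * (z * ε))) (nhdsWithin 0 (Ioi 0)) (nhds 1) := by
      have : Continuous (fun ε : ℝ => Real.exp (p * (z * ε))) := by fun_prop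
      simpa using (this.tendsto 0).mono_left nhdsWithin_le_nhds
    have h2 : Tendsto (fun ε : ℝ => (1 + ε ^ 2 + c * Real.exp (z * ε)) ^ b)
        (nhdsWithin 0 (Ioi 0)) (nhds ((1 + c) ^ b)) := by
      have : Continuous (fun ε : ℝ => 1 + ε ^ 2 + c * Real.exp (z * ε)) := by fun_prop
      have h := (this.tendsto 0).mono_left (nhdsWithin_le_nhds (s := Ioi 0))
      simp only [ne_eq, OfNat.ofNat_ne_zero, not_false_eq_true, zero_pow, add_zero, mul_zero,
        Real.exp_zero, mul_one] at h
      exact h.rpow_const (Or.inr hb)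
    have h3 : Tendsto (fun ε : ℝ => Real.sinh (z * ε / 2) / ε)
        (nhdsWithin 0 (Ioi 0)) (nhds (z / 2)) := by
      have hd : HasDerivAt (fun ε : ℝ => Real.sinh (z * ε / 2)) (z / 2) 0 := by
        have := (((hasDerivAt_id (0:ℝ)).const_mul z).div_const 2).sinh
        simpa using this
      have := hd.tendsto_slope.mono_left (nhdsWithin_mono 0 (fun x (hx : x ∈ Ioi (0:ℝ)) => ne_of_gt hx))
      refine this.congr (fun ε => ?_)
      simp [slope_def_field]
    have h4 := (Real.continuous_exp.tendsto _).comp ((h3.pow 2).const_mul (-(2 * a)))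
    have h5 := (h1.mul h2).mul h4
    have h6 : 1 * (1 + c) ^ b * Real.exp (-(2 * a) * (z / 2) ^ 2) =
        (1 + c) ^ b * Real.exp (-(a / 2) * z ^ 2) := by
      rw [one_mul]; congr 2; ring
    rw [h6] at h5
    exact h5

lemma F_eq (N : ℕ) (hN3 : 3 ≤ N) (s r : ℝ) (hr : 0 < r) :
    Real.exp (((N : ℝ) - 1) * r) * r ^ (1 - s) * F N s r =
      (1 + 1 / r) * ((4 * π) ^ (-(N : ℝ) / 2) * (1 / ((N : ℝ) - 1)) ^ (s - (N : ℝ) / 2)) *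
      ∫ z, KK (s - (N : ℝ) / 2) (((N : ℝ) - 1) / 2) (((N : ℝ) - 3) / 2) (1 / ((N : ℝ) - 1))
        (1 / √r) z := by
  have hNr : (3 : ℝ) ≤ N := by exact_mod_cast hN3
  obtain ⟨n, hn⟩ : ∃ n : ℝ, n = N := ⟨_, rfl⟩
  unfold F hN
  rw [← hn] at hNr ⊢
  set c := 1 / (n - 1) with hc
  have hn1 : 0 < n - 1 := by linarith
  have hc0 : 0 < c := by positivity
  set ε := 1 / √r with hε
  have hε0 : 0 < ε := by positivity
  have hrε : r = ε⁻¹ ^ 2 := by rw [hε]; simp [Real.sq_sqrt hr.le]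
  have himg : (fun z : ℝ => c * r * Real.exp (z * ε)) '' univ = Ioi 0 := by
    ext t
    simp only [image_univ, mem_range, mem_Ioi]
    constructor
    · rintro ⟨z, rfl⟩; positivity
    · intro ht
      refine ⟨Real.log (t / (c * r)) / ε, ?_⟩
      rw [div_mul_cancel₀ _ hε0.ne', Real.exp_log (by positivity)]
      field_simp
  have hinj : InjOn (fun z : ℝ => c * r * Real.exp (z * ε)) univ := by
    intro x _ y _ h
    have h1 := mul_left_cancel₀ (by positivity) h
    exact mul_right_cancel₀ hε0.ne' (Real.exp_injective h1)
  have hder : ∀ x ∈ (univ : Set ℝ), HasDerivWithinAt (fun z : ℝ => c * r * Real.exp (z * ε))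
      (c * r * (Real.exp (x * ε) * ε)) univ x := by
    intro x _
    have := (((hasDerivAt_id x).mul_const ε).exp).const_mul (c * r)
    simpa using this
  rw [← himg, integral_image_eq_integral_abs_deriv_smul MeasurableSet.univ hder hinj,
    setIntegral_univ, ← integral_const_mul, ← integral_const_mul]
  congr 1
  ext z
  unfold KK
  set v := Real.exp (z * ε) with hv
  have hv0 : 0 < v := Real.exp_pos _
  have habs : |c * r * (v * ε)| = c * r * v * ε := by
    rw [abs_of_pos (by positivity)]; ring
  have hsinh : Real.sinh (z * ε / 2) ^ 2 = (v + v⁻¹ - 2) / 4 := by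
    have h1 : v = Real.exp (z * ε / 2) * Real.exp (z * ε / 2) := by
      rw [← Real.exp_add, hv]; congr 1; ring
    rw [Real.sinh_eq, Real.exp_neg, h1]
    have := Real.exp_pos (z * ε / 2)
    field_simp
    ring
  have hexp : Real.exp (-(2 * ((n - 1) / 2)) * (Real.sinh (z * ε / 2) / ε) ^ 2) =
      Real.exp ((n - 1) * r) * Real.exp (-((n - 1) ^ 2 * (c * r * v)) / 4 - (n - 1) * r / 2 -
        r ^ 2 / (4 * (c * r * v))) := by
    rw [← Real.exp_add]
    congr 1
    rw [div_pow, hsinh, hc, hrε]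
    field_simp
    ring
  have hpv : Real.exp ((s - n / 2) * (z * ε)) = v ^ (s - n / 2) := by
    rw [hv, ← Real.exp_mul]; congr 1; ring
  rw [hexp, hpv, habs, smul_eq_mul]
  have hbr : (1 + r + c * r * v) ^ ((n - 3) / 2) =
      r ^ ((n - 3) / 2) * (1 + ε ^ 2 + c * v) ^ ((n - 3) / 2) := by
    rw [← Real.mul_rpow hr.le (by positivity)]
    congr 1
    rw [hrε]; field_simp; ring
  have ht : (4 * π * (c * r * v)) ^ (-n / 2) * (c * r * v) ^ (s - 1) * (c * r * v) =
      (4 * π) ^ (-n / 2) * (c ^ (s - n / 2) * r ^ (s - n / 2) * v ^ (s - n / 2)) := by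
    have hT : 0 < c * r * v := by positivity
    rw [Real.mul_rpow (by positivity) hT.le, ← Real.mul_rpow hc0.le hr.le,
      ← Real.mul_rpow (by positivity) hv0.le, mul_assoc, mul_assoc]
    congr 1
    nth_rewrite 3 [← Real.rpow_one (c * r * v)]
    rw [← Real.rpow_add hT, ← Real.rpow_add hT]
    congr 1; ring
  have hrp : r ^ (1 - s) * r ^ ((n - 3) / 2) * r ^ (s - n / 2) * ε * (1 + r) = 1 + 1 / r := by
    have hε' : ε = r ^ (-(1 / 2) : ℝ) := by
      rw [hε, Real.sqrt_eq_rpow, Real.rpow_neg hr.le, one_div]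
    rw [hε', ← Real.rpow_add hr, ← Real.rpow_add hr, ← Real.rpow_add hr]
    have : (1 - s + (n - 3) / 2 + (s - n / 2) + -(1 / 2)) = -1 := by ring
    rw [this, Real.rpow_neg_one]
    field_simp
    ring
  rw [hbr, ← hrp]
  set E := Real.exp (-((n - 1) ^ 2 * (c * r * v)) / 4 - (n - 1) * r / 2 -
        r ^ 2 / (4 * (c * r * v)))
  set B := (1 + ε ^ 2 + c * v) ^ ((n - 3) / 2)
  linear_combination (Real.exp ((n - 1) * r) * r ^ (1 - s) * E * r ^ ((n - 3) / 2) * B * (1 + r) * ε) * ht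

theorem F_long_distance_asymptotics (N : ℕ) (hN3 : 3 ≤ N) (s : ℝ) (hs0 : 0 < s) (hs1 : s < 1) :
    ∃ L > (0 : ℝ),
      Tendsto (fun r : ℝ => Real.exp (((N : ℝ) - 1) * r) * r ^ (1 - s) * F N s r) atTop
        (nhds L) := by
  have hN : (3 : ℝ) ≤ N := by exact_mod_cast hN3
  have hn1 : (0 : ℝ) < N - 1 := by linarith
  have hε : Tendsto (fun r : ℝ => 1 / √r) atTop (nhdsWithin 0 (Ioi 0)) := by
    simp only [one_div]
    exact tendsto_inv_atTop_nhdsGT_zero.comp Real.tendsto_sqrt_atTop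
  have hK := (KK_tendsto (s - (N : ℝ) / 2) (((N : ℝ) - 1) / 2) (((N : ℝ) - 3) / 2)
    (1 / ((N : ℝ) - 1)) (by positivity) (by linarith) (by positivity)).comp hε
  have h1 : Tendsto (fun r : ℝ => 1 + 1 / r) atTop (nhds (1 + 0)) := by
    simp only [one_div]
    exact tendsto_const_nhds.add tendsto_inv_atTop_zero
  have h2 := (h1.mul_const ((4 * π) ^ (-(N : ℝ) / 2) *
    (1 / ((N : ℝ) - 1)) ^ (s - (N : ℝ) / 2))).mul hK
  refine ⟨_, ?_, h2.congr' ?_⟩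
  · rw [integral_const_mul, integral_gaussian]
    positivity
  · filter_upwards [eventually_gt_atTop 0] with r hr
    exact (F_eq N hN3 s r hr).symm
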